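/- Let m₁ > 0 and m₄ > 0 be real numbers, and let S = {k·m₁ + l·m₄ : k, l ∈ ℕ} ⊆ ℝ be the threshold set. Let Δ ⊆ ℝ and set β = dist(Δ, S) = inf{|x − s| : x ∈ Δ, s ∈ S}. Let n ∈ ℕ, let μ : Fin n → ℝ be masses with μⱼ ∈ {0, m₁, m₄} for every j, and let p : Fin n → ℝ³ be momenta. If the total free energy Σⱼ √(‖pⱼ‖² + μⱼ²) belongs to Δ, then Σⱼ ‖pⱼ‖² / √(‖pⱼ‖² + μⱼ²) ≥ β (with the convention that a term with pⱼ = 0 and μⱼ = 0 equals 0). -/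

import Mathlib

open scoped BigOperators

/-- Pointwise (symbol-level) content of Proposition 5.1 of the paper: if the total free
energy of a configuration of particles of masses `μ j ∈ {0, m₁, m₄}` lies in a set `Δ` at
distance `β` from the threshold set `S = {k m₁ + l m₄}`, then the Mourre commutator symbol
`∑ ‖p j‖² / √(‖p j‖² + μ j²)` is at least `β`. -/
theorem mourre_symbol_lower_bound
    (m₁ m₄ : ℝ) (hm₁ : 0 < m₁) (hm₄ : 0 < m₄)
    (S : Set ℝ) (hS : S = {x : ℝ | ∃ k l : ℕ, x = k * m₁ + l * m₄})
    (Δ : Set ℝ) (β : ℝ)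
    (hβ : β = sInf {r : ℝ | ∃ x ∈ Δ, ∃ s ∈ S, r = |x - s|})
    (n : ℕ) (μ : Fin n → ℝ) (hμ : ∀ j, μ j = 0 ∨ μ j = m₁ ∨ μ j = m₄)
    (p : Fin n → EuclideanSpace ℝ (Fin 3))
    (hE : (∑ j, Real.sqrt (‖p j‖ ^ 2 + (μ j) ^ 2)) ∈ Δ) :
    β ≤ ∑ j, ‖p j‖ ^ 2 / Real.sqrt (‖p j‖ ^ 2 + (μ j) ^ 2) := by
  have hμ0 : ∀ j, 0 ≤ μ j := by
    intro j
    rcases hμ j with h | h | h <;> rw [h]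
    · exact hm₁.le
    · exact hm₄.le
  have hle : ∀ j, μ j ≤ Real.sqrt (‖p j‖ ^ 2 + (μ j) ^ 2) := by
    intro j
    apply Real.le_sqrt_of_sq_le
    nlinarith [sq_nonneg ‖p j‖]
  have hmem : ∀ t : Finset (Fin n), ∃ k l : ℕ, ∑ j ∈ t, μ j = k * m₁ + l * m₄ := by
    intro t
    induction t using Finset.induction_on with
    | empty => exact ⟨0, 0, by simp⟩
    | insert a t ha ih =>
      obtain ⟨k, l, h⟩ := ih
      rw [Finset.sum_insert ha, h]
      rcases hμ a with h' | h' | h' <;> rw [h']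
      · exact ⟨k, l, by ring⟩
      · exact ⟨k + 1, l, by push_cast; ring⟩
      · exact ⟨k, l + 1, by push_cast; ring⟩
  have hterm : ∀ j, Real.sqrt (‖p j‖ ^ 2 + (μ j) ^ 2) - μ j
      ≤ ‖p j‖ ^ 2 / Real.sqrt (‖p j‖ ^ 2 + (μ j) ^ 2) := by
    intro j
    have h1 := hle j
    have h0 := hμ0 j
    have hsq := Real.sq_sqrt (show 0 ≤ ‖p j‖ ^ 2 + (μ j) ^ 2 by positivity)
    generalize Real.sqrt (‖p j‖ ^ 2 + (μ j) ^ 2) = w at *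
    rcases (h0.trans h1).eq_or_lt with hw | hw
    · rw [← hw]
      simpa using h0
    · rw [le_div_iff₀ hw]
      nlinarith
  have hsum := Finset.sum_le_sum (fun j (_ : j ∈ Finset.univ) => hterm j)
  have hnn := Finset.sum_le_sum (fun j (_ : j ∈ Finset.univ) => hle j)
  rw [Finset.sum_sub_distrib] at hsum
  refine le_trans ?_ hsum
  rw [hβ]
  apply csInf_le
  · refine ⟨0, ?_⟩
    rintro r ⟨x, _, s, _, rfl⟩
    exact abs_nonneg _
  · refine ⟨_, hE, ∑ j, μ j, ?_, ?_⟩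
    · rw [hS]
      exact hmem Finset.univ
    · rw [abs_of_nonneg (sub_nonneg.2 hnn)]
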